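/- Let n ≥ 2 and let g be the function defined below. Then for every t ∈ ℝ \ {0}, (n²/2 − 1) g'''(t) + (n³ + 2n) g''(t) + (n⁴/2 + 4n² + 2) g'(t) ≤ 0; explicitly, this expression equals −(1/(2√(n²+8))) · n(n√(n²+8) + 6) e^{−(1/2)(n−√(n²+8))t} for t < 0, and −(1/(2√(n²+8))) · [ (2 + n²)√(n²+8) e^{−nt} + n(6 − n√(n²+8)) e^{−(1/2)(n+√(n²+8))t} ] for t > 0, and both expressions are nonpositive. -/

import Mathlib

open MeasureTheory Metric Set Filter
open scoped Topology RealInnerProductSpace NNReal ENNReal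

noncomputable section

/-- `ℝⁿ` with the Euclidean structure. -/
abbrev Euc (n : ℕ) := EuclideanSpace ℝ (Fin n)

/-- Pointwise Laplacian of `u : ℝⁿ → ℝ`. -/
def lap {n : ℕ} (u : Euc n → ℝ) (x : Euc n) : ℝ :=
  ∑ i : Fin n, fderiv ℝ (fun y => fderiv ℝ u y (EuclideanSpace.single i 1)) x
    (EuclideanSpace.single i 1)

/-- The fundamental solution `g` from Lemma 3.2 of the paper:
`g(t) = −(1/(2n√(n²+8)))·(n e^{−(1/2)(n−√(n²+8))t} − √(n²+8))` for `t < 0` and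
`g(t) = −(1/(2n√(n²+8)))·(n e^{−(1/2)(n+√(n²+8))t} − √(n²+8) e^{−nt})` for `t ≥ 0`. -/
def gfun (n : ℕ) (t : ℝ) : ℝ :=
  if t < 0 then
    -(1 / (2 * (n : ℝ) * Real.sqrt ((n : ℝ) ^ 2 + 8))) *
      ((n : ℝ) * Real.exp (-(1 / 2) * ((n : ℝ) - Real.sqrt ((n : ℝ) ^ 2 + 8)) * t)
        - Real.sqrt ((n : ℝ) ^ 2 + 8))
  else
    -(1 / (2 * (n : ℝ) * Real.sqrt ((n : ℝ) ^ 2 + 8))) *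
      ((n : ℝ) * Real.exp (-(1 / 2) * ((n : ℝ) + Real.sqrt ((n : ℝ) ^ 2 + 8)) * t)
        - Real.sqrt ((n : ℝ) ^ 2 + 8) * Real.exp (-(n : ℝ) * t))

theorem aux_deriv (A a B b C : ℝ) :
    deriv (fun t : ℝ => A * Real.exp (a * t) + B * Real.exp (b * t) + C) =
      fun t : ℝ => (A * a) * Real.exp (a * t) + (B * b) * Real.exp (b * t) + 0 := by
  funext t
  have h : ∀ c : ℝ, HasDerivAt (fun t : ℝ => Real.exp (c * t)) (Real.exp (c * t) * (c * 1)) t :=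
    fun c => ((hasDerivAt_id t).const_mul c).exp
  have := ((((h a).const_mul A).add ((h b).const_mul B)).add_const C).deriv
  refine Eq.trans this ?_
  ring

theorem aux_all (f : ℝ → ℝ) (t A a B b C : ℝ)
    (h : f =ᶠ[𝓝 t] fun t : ℝ => A * Real.exp (a * t) + B * Real.exp (b * t) + C) :
    deriv f t = A * a * Real.exp (a * t) + B * b * Real.exp (b * t) ∧
    iteratedDeriv 2 f t = A * a ^ 2 * Real.exp (a * t) + B * b ^ 2 * Real.exp (b * t) ∧
    iteratedDeriv 3 f t = A * a ^ 3 * Real.exp (a * t) + B * b ^ 3 * Real.exp (b * t) := by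
  refine ⟨?_, ?_, ?_⟩
  · rw [h.deriv_eq, aux_deriv]; ring
  · rw [h.iteratedDeriv_eq, iteratedDeriv_succ, iteratedDeriv_one, aux_deriv, aux_deriv]; ring
  · rw [h.iteratedDeriv_eq, iteratedDeriv_succ, iteratedDeriv_succ, iteratedDeriv_one, aux_deriv,
      aux_deriv, aux_deriv]; ring

/-- Formula (4.12.2): the combination
`(n²/2 − 1) g''' + (n³ + 2n) g'' + (n⁴/2 + 4n² + 2) g'` is nonpositive away from the
origin, with the explicit expressions for `t < 0` and `t > 0`. -/
theorem gfun_third_order_combination (n : ℕ) (hn : 2 ≤ n) :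
    ∀ t : ℝ, t ≠ 0 →
      (((n : ℝ) ^ 2 / 2 - 1) * iteratedDeriv 3 (gfun n) t
          + ((n : ℝ) ^ 3 + 2 * (n : ℝ)) * iteratedDeriv 2 (gfun n) t
          + ((n : ℝ) ^ 4 / 2 + 4 * (n : ℝ) ^ 2 + 2) * deriv (gfun n) t ≤ 0) ∧
      (t < 0 →
        ((n : ℝ) ^ 2 / 2 - 1) * iteratedDeriv 3 (gfun n) t
            + ((n : ℝ) ^ 3 + 2 * (n : ℝ)) * iteratedDeriv 2 (gfun n) t
            + ((n : ℝ) ^ 4 / 2 + 4 * (n : ℝ) ^ 2 + 2) * deriv (gfun n) t =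
          -(1 / (2 * Real.sqrt ((n : ℝ) ^ 2 + 8))) *
            ((n : ℝ) * ((n : ℝ) * Real.sqrt ((n : ℝ) ^ 2 + 8) + 6) *
              Real.exp (-(1 / 2) * ((n : ℝ) - Real.sqrt ((n : ℝ) ^ 2 + 8)) * t))) ∧
      (0 < t →
        ((n : ℝ) ^ 2 / 2 - 1) * iteratedDeriv 3 (gfun n) t
            + ((n : ℝ) ^ 3 + 2 * (n : ℝ)) * iteratedDeriv 2 (gfun n) t
            + ((n : ℝ) ^ 4 / 2 + 4 * (n : ℝ) ^ 2 + 2) * deriv (gfun n) t =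
          -(1 / (2 * Real.sqrt ((n : ℝ) ^ 2 + 8))) *
            ((2 + (n : ℝ) ^ 2) * Real.sqrt ((n : ℝ) ^ 2 + 8) * Real.exp (-(n : ℝ) * t)
              + (n : ℝ) * (6 - (n : ℝ) * Real.sqrt ((n : ℝ) ^ 2 + 8)) *
                Real.exp (-(1 / 2) * ((n : ℝ) + Real.sqrt ((n : ℝ) ^ 2 + 8)) * t))) := by
  intro t ht
  have hN : (2 : ℝ) ≤ (n : ℝ) := by exact_mod_cast hn
  generalize hg : gfun n = f
  replace hg := hg.symm
  unfold gfun at hg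
  generalize (n : ℝ) = N at *
  have hs2 : Real.sqrt (N ^ 2 + 8) ^ 2 = N ^ 2 + 8 := Real.sq_sqrt (by positivity)
  have hsN : N < Real.sqrt (N ^ 2 + 8) := Real.lt_sqrt_of_sq_lt (by linarith)
  generalize Real.sqrt (N ^ 2 + 8) = s at *
  have hs0 : 0 < s := by linarith
  have hN0 : 0 < N := by linarith
  have e1 : t < 0 → (N ^ 2 / 2 - 1) * iteratedDeriv 3 f t
            + (N ^ 3 + 2 * N) * iteratedDeriv 2 f t
            + (N ^ 4 / 2 + 4 * N ^ 2 + 2) * deriv f t =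
          -(1 / (2 * s)) * (N * (N * s + 6) * Real.exp (-(1 / 2) * (N - s) * t)) := by
    intro h
    obtain ⟨h1, h2, h3⟩ := aux_all f t (-(1 / (2 * s))) (-(1 / 2) * (N - s)) 0 0 (1 / (2 * N)) (by
      filter_upwards [Iio_mem_nhds h] with x hx
      rw [hg]
      simp only [if_pos (show x < 0 from hx)]
      field_simp
      ring)
    rw [h1, h2, h3]
    have hP : (N ^ 2 / 2 - 1) * (-(1 / 2) * (N - s)) ^ 3 + (N ^ 3 + 2 * N) * (-(1 / 2) * (N - s)) ^ 2
        + (N ^ 4 / 2 + 4 * N ^ 2 + 2) * (-(1 / 2) * (N - s)) = N * (N * s + 6) := by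
      have h3 : s ^ 3 = s * (N ^ 2 + 8) := by rw [← hs2]; ring
      ring_nf
      rw [h3, hs2]
      ring
    rw [← hP]
    ring
  have e2 : 0 < t → (N ^ 2 / 2 - 1) * iteratedDeriv 3 f t
            + (N ^ 3 + 2 * N) * iteratedDeriv 2 f t
            + (N ^ 4 / 2 + 4 * N ^ 2 + 2) * deriv f t =
          -(1 / (2 * s)) * ((2 + N ^ 2) * s * Real.exp (-N * t)
              + N * (6 - N * s) * Real.exp (-(1 / 2) * (N + s) * t)) := by
    intro h
    obtain ⟨h1, h2, h3⟩ := aux_all f t (-(1 / (2 * s))) (-(1 / 2) * (N + s)) (1 / (2 * N)) (-N) 0 (by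
      filter_upwards [Ioi_mem_nhds h] with x hx
      rw [hg]
      simp only [if_neg (not_lt.mpr (le_of_lt (show 0 < x from hx)))]
      field_simp
      ring)
    rw [h1, h2, h3]
    have hP : (N ^ 2 / 2 - 1) * (-(1 / 2) * (N + s)) ^ 3 + (N ^ 3 + 2 * N) * (-(1 / 2) * (N + s)) ^ 2
        + (N ^ 4 / 2 + 4 * N ^ 2 + 2) * (-(1 / 2) * (N + s)) = N * (6 - N * s) := by
      have h3 : s ^ 3 = s * (N ^ 2 + 8) := by rw [← hs2]; ring
      ring_nf
      rw [h3, hs2]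
      ring
    rw [← hP]
    generalize Real.exp (-N * t) = E
    generalize Real.exp (-(1 / 2) * (N + s) * t) = F
    field_simp
    ring
  refine ⟨?_, e1, e2⟩
  rcases lt_or_gt_of_ne ht with h | h
  · rw [e1 h, neg_mul]
    have : 0 ≤ 1 / (2 * s) * (N * (N * s + 6) * Real.exp (-(1 / 2) * (N - s) * t)) := by positivity
    linarith
  · rw [e2 h, neg_mul]
    have hE : Real.exp (-(1 / 2) * (N + s) * t) ≤ Real.exp (-N * t) :=
      Real.exp_le_exp.mpr (by nlinarith)
    have hF := Real.exp_pos (-(1 / 2) * (N + s) * t)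
    generalize Real.exp (-N * t) = E at *
    generalize Real.exp (-(1 / 2) * (N + s) * t) = F at *
    have h1 : (2 + N ^ 2) * s * F ≤ (2 + N ^ 2) * s * E :=
      mul_le_mul_of_nonneg_left hE (by positivity)
    have h2 : 0 ≤ (2 * s + 6 * N) * F := by positivity
    have h3 : 0 ≤ (2 + N ^ 2) * s * E + N * (6 - N * s) * F := by nlinarith
    have : 0 ≤ 1 / (2 * s) * ((2 + N ^ 2) * s * E + N * (6 - N * s) * F) :=
      mul_nonneg (by positivity) h3
    linarith
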